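/- Let m ≥ 1 be an integer. There exists T₀ > 0 such that for every t ≥ T₀: if Δ₃'(2,2m;1/2+it) = 0 (derivative with respect to the complex variable s), then Δ₃(2,2m;1/2+it) = 0; that is, in the asymptotic region the derivative Δ₃'(2,2m;·) has no zeros on the critical line which are not zeros of Δ₃(2,2m;·) of multiple order. -/

import Mathlib

/-!
Write `P(s) = ∏_{k < 2m} (1 - s + k) = Γ(1-s+2m) / Γ(1-s)`. In the strip `0 < Re s < 1`,
`Δ₃ = E / P` with `E(s) = 4 π^{2m} X(s) Y(s)`, where

* `X(s) = π^{-s} Γ(s) ζ(s) L(χ₋₄, s)` is invariant under `s ↦ 1 - s` (`X_one_sub`): this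
  combines the functional equations of `ζ` and of `L(χ₋₄, ·)`, the root number being `1`, with
  the duplication formula;
* `Y(s) = π^{-(s+2m)} Γ(s+2m) F(s)` is invariant under `s ↦ 1 - s` (`Y_one_sub`): it is the
  Mellin transform at `s + 2m` of the harmonic theta series
  `∑ Re((a+ib)^{4m}) exp(-π t (a²+b²))`.

Both commute with complex conjugation, so `E` is real on the critical line, and hence `E'/E` is
purely imaginary there (`crit_logDeriv_re`). On the other hand
`Re (P'/P)(s) = -∑ Re 1/(1-s+k) < 0` for `Re s < 1` (`P_logDeriv_re`). Thus
`Δ₃'/Δ₃ = E'/E - P'/P` has positive real part at each point of the line where `Δ₃ ≠ 0`, and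
`Δ₃'` cannot vanish there.

The transformation law of the theta series (`TC_feq`) comes from the two-variable Jacobi theta
function. In `θ(u, it) θ(iu, it)` the Gaussian factors of the two functional equations cancel,
because `u² + (iu)² = 0`; the coefficient of `u^N` in this product is a constant multiple of
`∑ (a+ib)^N exp(-π t (a²+b²))`, and comparing coefficients gives the law for every `N`.
-/

/-- The angle `θ_{p₁,p₂} = arg(p₁ + i p₂)` of a lattice point. -/
noncomputable def latticeAngle (p : ℤ × ℤ) : ℝ :=
  Complex.arg ((p.1 : ℂ) + (p.2 : ℂ) * Complex.I)

/-- The angular lattice sum `𝒞(n,m;s)`. -/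
noncomputable def latC (n m : ℕ) (s : ℂ) : ℂ :=
  ∑' p : {p : ℤ × ℤ // p ≠ 0},
    ((Real.cos ((m : ℝ) * latticeAngle p.1) : ℂ)) ^ n /
      (((p.1.1 : ℂ)) ^ 2 + ((p.1.2 : ℂ)) ^ 2) ^ s

/-- The angular lattice sum `𝒮(n,m;s)`. -/
noncomputable def latS (n m : ℕ) (s : ℂ) : ℂ :=
  ∑' p : {p : ℤ × ℤ // p ≠ 0},
    ((Real.sin ((m : ℝ) * latticeAngle p.1) : ℂ)) ^ n /
      (((p.1.1 : ℂ)) ^ 2 + ((p.1.2 : ℂ)) ^ 2) ^ s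

/-- The ratio `ℱ_{2m}(s) = Γ(1-s+2m)Γ(s) / (Γ(1-s)Γ(s+2m))`. -/
noncomputable def calF (m : ℕ) (s : ℂ) : ℂ :=
  (Complex.Gamma (1 - s + 2 * m) * Complex.Gamma s) /
    (Complex.Gamma (1 - s) * Complex.Gamma (s + 2 * m))

/-- `Δ₃(2,2m;s) = (Γ(s)² / (π^{2s} ℱ_{2m}(s))) · 4 ζ(s) L(s) · F(s)`, where `L` is the
L-function of the nontrivial character mod 4 and `F` the continuation of `𝒞(1,4m;·)`. -/
noncomputable def Delta3 (m : ℕ) (L F : ℂ → ℂ) (s : ℂ) : ℂ :=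
  (Complex.Gamma s) ^ 2 / ((Real.pi : ℂ) ^ (2 * s) * calF m s) *
    (4 * riemannZeta s * L s) * F s

namespace NoSep

open Complex ComplexConjugate

/-! ### The nontrivial character modulo 4 -/

lemma chi_three (χ : DirichletCharacter ℂ 4) (hχ : χ ≠ 1) : χ 3 = -1 := by
  have h1 : χ 3 * χ 3 = 1 := by
    rw [← map_mul, show (3 * 3 : ZMod 4) = 1 by decide, map_one]
  rcases mul_self_eq_one_iff.mp h1 with h | h
  · exfalso
    apply hχ
    ext a
    have : (a : ZMod 4) = 1 ∨ (a : ZMod 4) = 3 := by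
      revert a; decide
    rcases this with h' | h' <;> simp [h', h]
    rw [← h', MulChar.one_apply_coe]
  · exact h

lemma chi_inv (χ : DirichletCharacter ℂ 4) : χ⁻¹ = χ := by
  rw [inv_eq_iff_mul_eq_one]
  ext a
  rw [MulChar.mul_apply, ← map_mul, MulChar.one_apply_coe]
  have : (a * a : ZMod 4) = 1 := by revert a; decide
  rw [this, map_one]

lemma chi_odd (χ : DirichletCharacter ℂ 4) (hχ : χ ≠ 1) : χ.Odd := by
  rw [DirichletCharacter.Odd, ← chi_three χ hχ]; congr 1

lemma chi_primitive (χ : DirichletCharacter ℂ 4) (hχ : χ ≠ 1) : χ.IsPrimitive := by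
  rw [DirichletCharacter.isPrimitive_def]
  have hd := χ.conductor_dvd_level
  have h1 : χ.conductor ≠ 1 := fun h => hχ (χ.eq_one_iff_conductor_eq_one.mpr h)
  have h2 : χ.conductor ≠ 2 := by
    intro h
    have hf := χ.factorsThrough_conductor
    rw [h] at hf
    rw [DirichletCharacter.factorsThrough_iff_ker_unitsMap (by norm_num)] at hf
    apply hχ
    ext a
    have ha : a ∈ (ZMod.unitsMap (show 2 ∣ 4 by norm_num)).ker := by
      rw [MonoidHom.mem_ker]
      exact Subsingleton.elim _ _
    have := hf ha
    rw [MonoidHom.mem_ker] at this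
    rw [← MulChar.coe_toUnitHom, this, MulChar.one_apply_coe, Units.val_one]
  have h4 : χ.conductor ≤ 4 := Nat.le_of_dvd (by norm_num) hd
  interval_cases h : χ.conductor <;> omega

lemma four_cpow (w : ℂ) : (4 : ℂ) ^ w = 2 ^ w * 2 ^ w := by
  have := Complex.mul_cpow_ofReal_nonneg (a := 2) (b := 2) zero_le_two zero_le_two w
  rw [Complex.ofReal_ofNat] at this
  rw [← this]; norm_num

lemma chi_rootNumber (χ : DirichletCharacter ℂ 4) (hχ : χ ≠ 1) : χ.rootNumber = 1 := by
  have h3 := chi_three χ hχ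
  have h0 : χ 0 = 0 := χ.map_zero' (by norm_num)
  have h2 : χ 2 = 0 := MulChar.map_nonunit _ (by decide)
  have e1 : ZMod.stdAddChar (1 : ZMod 4) = Complex.I := by
    have := ZMod.stdAddChar_coe (N := 4) 1
    rw [Int.cast_one] at this
    rw [this, show (2 * Real.pi * Complex.I * (1 : ℤ) / (4 : ℕ) : ℂ) = Real.pi / 2 * Complex.I by push_cast; ring,
      Complex.exp_pi_div_two_mul_I]
  have e3 : ZMod.stdAddChar (3 : ZMod 4) = -Complex.I := by
    rw [show (3 : ZMod 4) = 1 + 1 + 1 by decide, AddChar.map_add_eq_mul, AddChar.map_add_eq_mul, e1,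
      Complex.I_mul_I]; ring
  have hg : gaussSum χ ZMod.stdAddChar = 2 * Complex.I := by
    rw [gaussSum]
    have : (Finset.univ : Finset (ZMod 4)) = {0, 1, 2, 3} := by decide
    rw [this, Finset.sum_insert (by decide), Finset.sum_insert (by decide),
      Finset.sum_insert (by decide), Finset.sum_singleton, h0, h2, h3, e1, e3, map_one]
    ring
  have h4 : ((4 : ℕ) : ℂ) ^ (1 / 2 : ℂ) = 2 := by
    rw [Nat.cast_ofNat, four_cpow, ← Complex.cpow_add _ _ two_ne_zero]
    norm_num
  rw [DirichletCharacter.rootNumber, hg, h4, if_neg (chi_odd χ hχ).not_even, pow_one]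
  field_simp

/-! ### The completed zeta function of the Gaussian integers -/

/-- `π^{-s} Γ(s) ζ(s) L(χ, s)`; for `χ = χ₋₄` this is, up to a constant, the completed Dedekind
zeta function of `ℤ[i]`. -/
noncomputable def X (χ : DirichletCharacter ℂ 4) (s : ℂ) : ℂ :=
  (Real.pi : ℂ) ^ (-s) * Gamma s * riemannZeta s * χ.LFunction s

lemma strip_ne_zero {s : ℂ} (h0 : 0 < s.re) : s ≠ 0 := by
  rintro rfl; simp at h0

/-- Relation to Mathlib's completed functions; `Γ_ℝ(s) Γ_ℝ(s+1) = 2 (2π)^{-s} Γ(s)` merges the two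
gamma factors. -/
lemma X_eq (χ : DirichletCharacter ℂ 4) (hχ : χ ≠ 1) {s : ℂ} (h0 : 0 < s.re) :
    2 * X χ s = 2 ^ s * (completedRiemannZeta s * χ.completedLFunction s) := by
  have hs := strip_ne_zero h0
  have g1 : Gammaℝ s ≠ 0 := Gammaℝ_ne_zero_of_re_pos h0
  have g2 : Gammaℝ (s + 1) ≠ 0 := Gammaℝ_ne_zero_of_re_pos (by simp; linarith)
  have hG := Gammaℝ_mul_Gammaℝ_add_one s
  rw [Gammaℂ_def] at hG
  have h2 : (2 : ℂ) ^ s * (2 * (Real.pi : ℂ)) ^ (-s) = (Real.pi : ℂ) ^ (-s) := by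
    have := mul_cpow_ofReal_nonneg (a := 2) (b := Real.pi) zero_le_two Real.pi_pos.le (-s)
    rw [ofReal_ofNat] at this
    rw [this, ← mul_assoc, ← cpow_add _ _ two_ne_zero]
    simp
  rw [X, riemannZeta_def_of_ne_zero hs, χ.LFunction_eq_completed_div_gammaFactor s (Or.inl hs),
    (chi_odd χ hχ).gammaFactor_def, ← h2]
  field_simp
  linear_combination -(completedRiemannZeta s * χ.completedLFunction s) * hG

lemma X_one_sub (χ : DirichletCharacter ℂ 4) (hχ : χ ≠ 1) {s : ℂ} (h0 : 0 < s.re)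
    (h1 : s.re < 1) : X χ (1 - s) = X χ s := by
  have e1 := X_eq χ hχ h0
  have e2 := X_eq χ hχ (s := 1 - s) (by simpa using h1)
  have e3 : (2 : ℂ) ^ (1 - s) * (2 ^ (s - 1 / 2) * 2 ^ (s - 1 / 2)) = 2 ^ s := by
    rw [← cpow_add _ _ two_ne_zero, ← cpow_add _ _ two_ne_zero]
    congr 1; ring
  rw [completedRiemannZeta_one_sub, (chi_primitive χ hχ).completedLFunction_one_sub,
    chi_rootNumber χ hχ, chi_inv χ, Nat.cast_ofNat, four_cpow] at e2
  refine mul_left_cancel₀ (two_ne_zero (α := ℂ)) ?_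
  rw [e1, e2]
  linear_combination (completedRiemannZeta s * χ.completedLFunction s) * e3

lemma conj_pi_cpow (s : ℂ) : conj ((Real.pi : ℂ) ^ s) = (Real.pi : ℂ) ^ (conj s) := by
  rw [cpow_conj _ _ (by rw [arg_ofReal_of_nonneg Real.pi_pos.le]; exact Real.pi_pos.ne), conj_ofReal]

/-- Entire functions that agree on a right half-plane are equal. -/
lemma eq_of_eq_re_gt {f g : ℂ → ℂ} (hf : Differentiable ℂ f) (hg : Differentiable ℂ g) (c : ℝ)
    (h : ∀ s : ℂ, c < s.re → f s = g s) : f = g := by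
  refine AnalyticOnNhd.eq_of_eventuallyEq (z₀ := ((c + 1 : ℝ) : ℂ))
    (analyticOnNhd_univ_iff_differentiable.mpr hf) (analyticOnNhd_univ_iff_differentiable.mpr hg) ?_
  filter_upwards [(isOpen_lt continuous_const continuous_re).mem_nhds
    (show c < ((c + 1 : ℝ) : ℂ).re by simp)] with s hs using h s hs

lemma L_conj (χ : DirichletCharacter ℂ 4) (hχ : χ ≠ 1) (s : ℂ) :
    χ.LFunction (conj s) = conj (χ.LFunction s) := by
  have hd := DirichletCharacter.differentiable_LFunction hχ
  have hreal : ∀ a : ZMod 4, conj (χ a) = χ a := by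
    intro a
    rw [starRingEnd_apply, MulChar.star_apply', chi_inv]
  have := eq_of_eq_re_gt (f := conj ∘ χ.LFunction ∘ conj) (g := χ.LFunction)
    (fun s => differentiableAt_conj_conj_iff.mpr (hd _)) hd 1 (by
      intro s hs
      simp only [Function.comp]
      rw [χ.LFunction_eq_LSeries (by simpa using hs), χ.LFunction_eq_LSeries hs, LSeries, LSeries,
        conj_tsum]
      refine tsum_congr fun n => ?_
      rcases eq_or_ne n 0 with rfl | hn
      · simp
      rw [LSeries.term_of_ne_zero hn, LSeries.term_of_ne_zero hn, map_div₀, hreal, ← conj_cpow _ _ (by rw [natCast_arg]; exact Real.pi_pos.ne), conj_natCast])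
  have h2 := congrFun this s
  simp only [Function.comp] at h2
  rw [← h2, conj_conj]

lemma X_conj (χ : DirichletCharacter ℂ 4) (hχ : χ ≠ 1) (s : ℂ) :
    X χ (conj s) = conj (X χ s) := by
  simp only [X, map_mul, conj_pi_cpow, map_neg, riemannZeta_conj, L_conj χ hχ, Gamma_conj]

lemma X_differentiableAt (χ : DirichletCharacter ℂ 4) (hχ : χ ≠ 1) {s : ℂ} (h0 : 0 < s.re)
    (h1 : s.re < 1) : DifferentiableAt ℂ (X χ) s := by
  have hG : DifferentiableAt ℂ Gamma s :=
    differentiableAt_Gamma s fun n hn => by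
      have := congrArg re hn
      simp only [neg_re, natCast_re] at this
      linarith [n.cast_nonneg (α := ℝ)]
  have hz : DifferentiableAt ℂ riemannZeta s := differentiableAt_riemannZeta (by rintro rfl; simp at h1)
  have hL := (DirichletCharacter.differentiable_LFunction hχ) s
  have hp : DifferentiableAt ℂ (fun s : ℂ => (Real.pi : ℂ) ^ (-s)) s :=
    differentiableAt_id.neg.const_cpow (Or.inl (by exact_mod_cast Real.pi_ne_zero))
  exact ((hp.mul hG).mul hz).mul hL

/-! ### Theta series with harmonic coefficients -/

/-- The lattice point `(a, b)` as the Gaussian integer `a + ib`. -/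
noncomputable def zz (p : ℤ × ℤ) : ℂ := p.1 + p.2 * I

lemma normSq_zz (p : ℤ × ℤ) : normSq (zz p) = (p.1 : ℝ) ^ 2 + (p.2 : ℝ) ^ 2 := by
  have : zz p = ((p.1 : ℝ) : ℂ) + ((p.2 : ℝ) : ℂ) * I := by simp [zz]
  rw [this, normSq_add_mul_I]

lemma normSq_zz_eq_zero {p : ℤ × ℤ} : normSq (zz p) = 0 ↔ p = 0 := by
  rw [normSq_zz]
  constructor
  · intro h
    have h1 : (p.1 : ℝ) = 0 := by nlinarith [sq_nonneg (p.1 : ℝ), sq_nonneg (p.2 : ℝ)]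
    have h2 : (p.2 : ℝ) = 0 := by nlinarith [sq_nonneg (p.1 : ℝ), sq_nonneg (p.2 : ℝ)]
    exact Prod.ext (by exact_mod_cast h1) (by exact_mod_cast h2)
  · rintro rfl; simp

lemma one_le_normSq {p : ℤ × ℤ} (hp : p ≠ 0) : 1 ≤ normSq (zz p) := by
  have h0 : normSq (zz p) ≠ 0 := fun h => hp (normSq_zz_eq_zero.mp h)
  have h1 := normSq_nonneg (zz p)
  rw [normSq_zz] at *
  have h2 : (0 : ℝ) < ((p.1 ^ 2 + p.2 ^ 2 : ℤ) : ℝ) := by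
    push_cast; exact lt_of_le_of_ne h1 (Ne.symm h0)
  have h3 : (1 : ℤ) ≤ p.1 ^ 2 + p.2 ^ 2 := by
    have : (0 : ℤ) < p.1 ^ 2 + p.2 ^ 2 := by exact_mod_cast h2
    omega
  exact_mod_cast h3

/-- The weight `exp(-π (a²+b²) t)`. The order of the factors is the one used in
`hasSum_mellin_pi_mul₀`. -/
noncomputable def gw (t : ℝ) (p : ℤ × ℤ) : ℝ := Real.exp (-Real.pi * normSq (zz p) * t)

lemma gw_pos (t : ℝ) (p : ℤ × ℤ) : 0 < gw t p := Real.exp_pos _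

lemma norm_zz_le (p : ℤ × ℤ) : ‖zz p‖ ≤ |(p.1 : ℝ)| + |(p.2 : ℝ)| := by
  refine (norm_add_le _ _).trans ?_
  simp

lemma summable_exp_gw (c : ℝ) (hc : 0 ≤ c) {t : ℝ} (ht : 0 < t) :
    Summable fun p : ℤ × ℤ => Real.exp (c * ‖zz p‖) * gw t p := by
  -- The exponent `c |n| - π t n²` corresponds to `S = c / (2π)` in the one-variable bound.
  have h := summable_pow_mul_jacobiTheta₂_term_bound (c / (2 * Real.pi)) ht 0
  have h2 := h.mul_of_nonneg h (fun n => by positivity) (fun n => by positivity)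
  refine h2.of_nonneg_of_le (fun p => mul_nonneg (Real.exp_pos _).le (gw_pos t p).le) fun p => ?_
  rw [pow_zero, one_mul, pow_zero, one_mul, gw, ← Real.exp_add, ← Real.exp_add, Real.exp_le_exp,
    normSq_zz]
  have h3 := mul_le_mul_of_nonneg_left (norm_zz_le p) hc
  have h4 : ∀ x : ℝ, -Real.pi * (t * x ^ 2 - 2 * (c / (2 * Real.pi)) * |x|) =
      -Real.pi * t * x ^ 2 + c * |x| := by
    intro x
    have := Real.pi_ne_zero
    field_simp
    ring
  push_cast
  rw [h4, h4]
  linarith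

lemma summable_pow_gw (N : ℕ) {t : ℝ} (ht : 0 < t) :
    Summable fun p : ℤ × ℤ => ‖zz p‖ ^ N * gw t p := by
  refine ((summable_exp_gw 1 zero_le_one ht).mul_left (N.factorial : ℝ)).of_nonneg_of_le
    (fun p => mul_nonneg (by positivity) (gw_pos t p).le) fun p => ?_
  rw [← mul_assoc]
  refine mul_le_mul_of_nonneg_right ?_ (gw_pos t p).le
  have := Real.pow_div_factorial_le_exp ‖zz p‖ (norm_nonneg _) N
  rw [div_le_iff₀ (by positivity)] at this
  rw [one_mul]; linarith

/-- The theta series `∑ (a+ib)^N exp(-π t (a²+b²))`. -/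
noncomputable def TC (N : ℕ) (t : ℝ) : ℂ := ∑' p : ℤ × ℤ, zz p ^ N * gw t p

/-- The product `θ(u, it) θ(iu, it)` of Jacobi theta functions, a generating function in `u` for
the theta series `TC N t`. -/
noncomputable def gen (t : ℝ) (u : ℂ) : ℂ :=
  jacobiTheta₂ u (I * t) * jacobiTheta₂ (I * u) (I * t)

lemma gen_term {t : ℝ} (u : ℂ) (a b : ℤ) :
    exp (2 * Real.pi * I * u * zz (a, b)) * gw t (a, b) = jacobiTheta₂_term a u (I * t) *
      jacobiTheta₂_term b (I * u) (I * t) := by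
  rw [gw, jacobiTheta₂_term, jacobiTheta₂_term, ofReal_exp, ← exp_add, ← exp_add, normSq_zz, zz]
  congr 1
  push_cast
  linear_combination -(Real.pi * t * (a ^ 2 + b ^ 2) : ℂ) * I_sq

lemma gen_hasSum_exp {t : ℝ} (ht : 0 < t) (u : ℂ) :
    HasSum (fun p : ℤ × ℤ => exp (2 * Real.pi * I * u * zz p) * gw t p) (gen t u) := by
  have him : 0 < (I * t).im := by simpa using ht
  have h1 := hasSum_jacobiTheta₂_term u him
  have h2 := hasSum_jacobiTheta₂_term (I * u) him
  have h4 := summable_mul_of_summable_norm h1.summable.norm h2.summable.norm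
  have h3 := h1.mul h2 h4
  have h5 : (fun p : ℤ × ℤ => exp (2 * Real.pi * I * u * zz p) * gw t p) = fun p : ℤ × ℤ =>
    jacobiTheta₂_term p.1 u (I * t) * jacobiTheta₂_term p.2 (I * u) (I * t) := 
    funext fun p => gen_term u p.1 p.2
  rw [gen, h5]
  exact h3

/-- Power series expansion of the generating function in `u`. -/
lemma gen_hasSum {t : ℝ} (ht : 0 < t) (u : ℂ) :
    HasSum (fun N : ℕ => u ^ N * ((2 * Real.pi * I) ^ N / N.factorial * TC N t)) (gen t u) := by
  let f : (ℤ × ℤ) × ℕ → ℂ := fun x => (2 * Real.pi * I * u * zz x.1) ^ x.2 / x.2.factorial * gw t x.1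
  have hexp : ∀ p, HasSum (fun N => f (p, N)) (exp (2 * Real.pi * I * u * zz p) * gw t p) := by
    intro p
    have := NormedSpace.expSeries_div_hasSum_exp (2 * Real.pi * I * u * zz p)
    rw [← exp_eq_exp_ℂ] at this
    exact this.mul_right _
  have hsum : Summable f := by
    refine Summable.of_norm ((summable_prod_of_nonneg fun x => norm_nonneg _).mpr ⟨fun p => ?_, ?_⟩)
    · exact (hexp p).summable.norm
    · refine (summable_exp_gw (2 * Real.pi * ‖u‖) (by positivity) ht).congr fun p => ?_
      have := NormedSpace.expSeries_div_hasSum_exp (2 * Real.pi * ‖u‖ * ‖zz p‖)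
      rw [← Real.exp_eq_exp_ℝ] at this
      rw [← (this.mul_right (gw t p)).tsum_eq]
      refine tsum_congr fun N => ?_
      simp [f, abs_of_pos Real.pi_pos, abs_of_pos (gw_pos t p)]
  have htot : HasSum f (gen t u) := by
    have := hsum.hasSum.prod_fiberwise hexp
    rw [← this.unique (gen_hasSum_exp ht u)]
    exact hsum.hasSum
  -- Interchange the summations over lattice points and over exponents.
  have hsw := (Equiv.prodComm ℕ (ℤ × ℤ)).hasSum_iff.mpr htot
  have hsw2 := hsw.prod_fiberwise (fun N => (hsw.summable.prod_factor N).hasSum)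
  refine hsw2.congr_fun fun N => ?_
  rw [TC, ← tsum_mul_left, ← tsum_mul_left]
  refine tsum_congr fun p => ?_
  simp only [f, Function.comp, Equiv.prodComm_apply, Prod.swap]
  ring

/-- The Gaussian factors of the two Jacobi theta functions cancel because `u² + (iu)² = 0`. -/
lemma gen_feq {t : ℝ} (ht : 0 < t) (u : ℂ) :
    gen t u = 1 / t * gen (1 / t) (u / (I * t)) := by
  have ht' : (t : ℂ) ≠ 0 := by exact_mod_cast ht.ne'
  have hτ : -I * (I * t) = t := by linear_combination -(t : ℂ) * I_sq
  have hi : -1 / (I * t) = I * ((1 / t : ℝ) : ℂ) := by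
    push_cast; field_simp; rw [I_sq]
  have hh : (t : ℂ) ^ (1 / 2 : ℂ) * (t : ℂ) ^ (1 / 2 : ℂ) = t := by
    rw [← cpow_add _ _ ht']; norm_num
  have hx : (t : ℂ) ^ (1 / 2 : ℂ) ≠ 0 := fun h => by rw [h] at hh; apply ht'; rw [← hh]; simp
  have he : exp (-Real.pi * I * u ^ 2 / (I * t)) * exp (-Real.pi * I * (I * u) ^ 2 / (I * t)) = 1 := by
    rw [← exp_add, exp_eq_one_iff]
    refine ⟨0, ?_⟩
    rw [mul_pow, I_sq]; simp; ring
  rw [gen, gen, jacobiTheta₂_functional_equation u, jacobiTheta₂_functional_equation (I * u), hτ, hi,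
    mul_div_assoc I u]
  calc _ = 1 / ((t : ℂ) ^ (1 / 2 : ℂ) * (t : ℂ) ^ (1 / 2 : ℂ)) *
      (exp (-Real.pi * I * u ^ 2 / (I * t)) * exp (-Real.pi * I * (I * u) ^ 2 / (I * t))) *
      (jacobiTheta₂ (u / (I * t)) (I * ((1 / t : ℝ) : ℂ)) *
        jacobiTheta₂ (I * (u / (I * t))) (I * ((1 / t : ℝ) : ℂ))) := by
        field_simp
    _ = _ := by rw [hh, he]; ring

lemma coeff_unique {f : ℂ → ℂ} {a b : ℕ → ℂ} (ha : ∀ u, HasSum (fun N => u ^ N * a N) (f u))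
    (hb : ∀ u, HasSum (fun N => u ^ N * b N) (f u)) : a = b := by
  have key : ∀ c : ℕ → ℂ, (∀ u, HasSum (fun N => u ^ N * c N) (f u)) →
      HasFPowerSeriesAt f (FormalMultilinearSeries.ofScalars ℂ c) 0 := by
    intro c hc
    rw [hasFPowerSeriesAt_iff]
    refine Filter.Eventually.of_forall fun u => ?_
    simpa using hc u
  have h := (key a ha).eq_formalMultilinearSeries (key b hb)
  funext N
  have := congrArg (fun p => p.coeff N) h
  simpa using this

lemma TC_feq (m : ℕ) {t : ℝ} (ht : 0 < t) :
    TC (4 * m) (1 / t) = (t : ℂ) ^ (4 * m + 1) * TC (4 * m) t := by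
  have ht' : (t : ℂ) ≠ 0 := by exact_mod_cast ht.ne'
  have h := coeff_unique (gen_hasSum ht)
    (b := fun N => 1 / t * (1 / (I * t)) ^ N *
      ((2 * Real.pi * I) ^ N / N.factorial * TC N (1 / t))) (by
      intro u
      rw [gen_feq ht u]
      refine ((gen_hasSum (one_div_pos.mpr ht) (u / (I * t))).mul_left (1 / (t : ℂ))).congr_fun ?_
      intro N
      rw [div_eq_mul_one_div u, mul_pow]
      ring)
  have h2 := congrFun h (4 * m)
  have h3 : (2 * Real.pi * I) ^ (4 * m) / ((4 * m).factorial : ℂ) ≠ 0 := by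
    refine div_ne_zero (pow_ne_zero _ (by simp [Real.pi_ne_zero])) ?_
    exact_mod_cast (4 * m).factorial_ne_zero
  have h4 : TC (4 * m) t = 1 / t * (1 / (I * t)) ^ (4 * m) * TC (4 * m) (1 / t) := by
    refine mul_left_cancel₀ h3 ?_
    rw [h2]; ring
  have h5 : (I * t : ℂ) ^ (4 * m) = t ^ (4 * m) := by
    rw [mul_pow, pow_mul I, I_pow_four, one_pow, one_mul]
  rw [h4, div_pow, h5, pow_succ]
  field_simp
  simp

/-- The real part of `TC N t`. Reflecting `b ↦ -b` shows that `TC N t` is itself real; passing to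
real parts avoids that step and produces the coefficients `cos (N θ)`. -/
noncomputable def Th (N : ℕ) (t : ℝ) : ℝ := ∑' p : ℤ × ℤ, (zz p ^ N).re * gw t p

lemma norm_term_le (N : ℕ) (t : ℝ) (p : ℤ × ℤ) :
    ‖(zz p ^ N).re * gw t p‖ ≤ ‖zz p‖ ^ N * gw t p := by
  rw [norm_mul, Real.norm_of_nonneg (gw_pos t p).le]
  refine mul_le_mul_of_nonneg_right ?_ (gw_pos t p).le
  rw [← norm_pow]
  exact abs_re_le_norm _

lemma Th_hasSum (N : ℕ) {t : ℝ} (ht : 0 < t) :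
    HasSum (fun p : ℤ × ℤ => (zz p ^ N).re * gw t p) (Th N t) :=
  (Summable.of_norm_bounded (summable_pow_gw N ht) (norm_term_le N t)).hasSum

lemma TC_re (N : ℕ) {t : ℝ} (ht : 0 < t) : (TC N t).re = Th N t := by
  have hs : Summable fun p : ℤ × ℤ => zz p ^ N * (gw t p : ℂ) := by
    refine Summable.of_norm_bounded (summable_pow_gw N ht) fun p => ?_
    rw [norm_mul, norm_pow, norm_real, Real.norm_of_nonneg (gw_pos t p).le]
  rw [TC, re_tsum hs, Th]
  exact tsum_congr fun p => re_mul_ofReal _ _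

lemma Th_feq (m : ℕ) {t : ℝ} (ht : 0 < t) :
    Th (4 * m) (1 / t) = t ^ (4 * m + 1) * Th (4 * m) t := by
  rw [← TC_re _ (one_div_pos.mpr ht), ← TC_re _ ht, TC_feq m ht, ← ofReal_pow, re_ofReal_mul]

lemma gw_anti {s t : ℝ} (h : s ≤ t) (p : ℤ × ℤ) : gw t p ≤ gw s p := by
  refine Real.exp_le_exp.mpr (mul_le_mul_of_nonpos_left h ?_)
  have := mul_nonneg Real.pi_pos.le (normSq_nonneg (zz p))
  linarith

lemma Th_continuousOn (N : ℕ) : ContinuousOn (Th N) (Set.Ioi 0) := by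
  intro t ht
  have ht2 : (0 : ℝ) < t / 2 := half_pos ht
  have h : ContinuousOn (Th N) (Set.Ioi (t / 2)) := by
    refine continuousOn_tsum (u := fun p => ‖zz p‖ ^ N * gw (t / 2) p) (fun p => ?_)
      (summable_pow_gw N ht2) fun p x hx => (norm_term_le N x p).trans ?_
    · unfold gw; fun_prop
    · exact mul_le_mul_of_nonneg_left (gw_anti (le_of_lt hx) p) (by positivity)
  exact (h.continuousAt (Ioi_mem_nhds (half_lt_self ht))).continuousWithinAt

lemma Th_decay {N : ℕ} (hN : N ≠ 0) (r : ℝ) :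
    (fun t => (Th N t : ℂ)) =O[Filter.atTop] fun t : ℝ => t ^ r := by
  have h1 : (fun t => (Th N t : ℂ)) =O[Filter.atTop] fun t : ℝ => Real.exp (-Real.pi * t) := by
    refine Asymptotics.IsBigO.of_bound
      (Real.exp Real.pi * ∑' p : ℤ × ℤ, ‖zz p‖ ^ N * gw 1 p) ?_
    filter_upwards [Filter.eventually_ge_atTop 1] with t ht
    have ht0 : (0 : ℝ) < t := by linarith
    rw [norm_real, Real.norm_of_nonneg (Real.exp_pos _).le, mul_right_comm, ← Real.exp_add,
      ← tsum_mul_left, Th]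
    refine tsum_of_norm_bounded ((summable_pow_gw N one_pos).mul_left _).hasSum fun p => ?_
    refine (norm_term_le N t p).trans ?_
    rcases eq_or_ne p 0 with rfl | hp
    · simp [zz, hN]
    -- `|z|² ≥ 1` gives `exp(-π|z|²t) ≤ exp(π - πt) exp(-π|z|²)` for `t ≥ 1`.
    · rw [mul_left_comm]
      refine mul_le_mul_of_nonneg_left ?_ (by positivity)
      rw [gw, gw, ← Real.exp_add, Real.exp_le_exp]
      have := mul_nonneg Real.pi_pos.le
        (mul_nonneg (sub_nonneg.mpr ht) (sub_nonneg.mpr (one_le_normSq hp)))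
      linarith
  exact h1.trans (isLittleO_exp_neg_mul_rpow_atTop Real.pi_pos r).isBigO

/-- The theta series of order `4m` as a self-dual functional equation pair of weight `4m + 1`. -/
noncomputable def pair (m : ℕ) (hm : 1 ≤ m) : WeakFEPair ℂ where
  f := fun t => (Th (4 * m) t : ℂ)
  g := fun t => (Th (4 * m) t : ℂ)
  k := 4 * m + 1
  ε := 1
  f₀ := 0
  g₀ := 0
  hf_int := (continuous_ofReal.comp_continuousOn (Th_continuousOn _)).locallyIntegrableOn
    measurableSet_Ioi
  hg_int := (continuous_ofReal.comp_continuousOn (Th_continuousOn _)).locallyIntegrableOn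
    measurableSet_Ioi
  hk := by positivity
  hε := one_ne_zero
  h_feq := by
    intro x hx
    rw [Th_feq m hx, one_mul, smul_eq_mul, ofReal_mul]
    congr 2
    exact_mod_cast (Real.rpow_natCast x (4 * m + 1)).symm
  hf_top := fun r => by simpa using Th_decay (by omega) r
  hg_top := fun r => by simpa using Th_decay (by omega) r

lemma pair_strong (m : ℕ) (hm : 1 ≤ m) : IsStrongFEPair (pair m hm) := ⟨rfl, rfl⟩

/-! ### The completed angular lattice sum -/

/-- The completed angular lattice sum: `π^{-(s+2m)} Γ(s+2m) 𝒞(1,4m;s)` for `Re s > 1`, defined for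
all `s` as a Mellin transform. -/
noncomputable def Y (m : ℕ) (s : ℂ) : ℂ := mellin (fun t => (Th (4 * m) t : ℂ)) (s + 2 * m)

lemma Y_differentiable {m : ℕ} (hm : 1 ≤ m) : Differentiable ℂ (Y m) := by
  have h := (pair_strong m hm).differentiable_Λ
  rw [(pair_strong m hm).Λ_eq] at h
  exact h.comp (differentiable_id.add_const _)

lemma Y_one_sub {m : ℕ} (hm : 1 ≤ m) (s : ℂ) : Y m (1 - s) = Y m s := by
  have h := (pair m hm).functional_equation (s + 2 * m)
  rw [(pair_strong m hm).Λ_eq, (pair_strong m hm).symm_Λ_eq] at h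
  have e : (((pair m hm).k : ℝ) : ℂ) - (s + 2 * m) = 1 - s + 2 * m := by
    simp only [pair]; push_cast; ring
  rw [e] at h
  simpa [pair, Y] using h

lemma Y_conj (m : ℕ) (s : ℂ) : Y m (conj s) = conj (Y m s) := by
  rw [Y, Y, mellin, mellin, ← integral_conj]
  refine MeasureTheory.setIntegral_congr_fun measurableSet_Ioi fun t ht => ?_
  have : (t : ℂ).arg ≠ Real.pi := by
    rw [arg_ofReal_of_nonneg (le_of_lt ht)]; exact Real.pi_pos.ne
  have e : conj s + 2 * m - 1 = conj (s + 2 * m - 1) := by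
    rw [map_sub, map_add, map_mul, map_ofNat, map_natCast, map_one]
  simp only [smul_eq_mul, map_mul, conj_ofReal]
  rw [e, cpow_conj _ _ this, conj_ofReal]

lemma summable_zz_rpow {r : ℝ} (hr : 2 < r) : Summable fun p : ℤ × ℤ => ‖zz p‖ ^ (-r) := by
  have h := (finTwoArrowEquiv ℤ).symm.summable_iff.mpr (EisensteinSeries.summable_one_div_norm_rpow hr)
  refine h.of_nonneg_of_le (fun p => by positivity) fun p => ?_
  rcases eq_or_ne p 0 with rfl | hp
  · have : ((finTwoArrowEquiv ℤ).symm 0) = 0 := by ext i; fin_cases i <;> rfl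
    simp only [Function.comp, this, norm_zero]
    simp [zz]
  have hpos : 0 < ‖(finTwoArrowEquiv ℤ).symm p‖ := by
    rw [norm_pos_iff]
    intro h0
    apply hp
    have h1 := congrFun h0 0
    have h2 := congrFun h0 1
    exact Prod.ext h1 h2
  refine Real.rpow_le_rpow_of_nonpos hpos ?_ (by linarith)
  rw [pi_norm_le_iff_of_nonneg (norm_nonneg _)]
  have e : zz p = ((p.1 : ℝ) : ℂ) + ((p.2 : ℝ) : ℂ) * I := by simp [zz]
  intro i
  fin_cases i
  · have := abs_re_le_norm (zz p)
    rw [e] at this ⊢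
    simpa [Int.norm_eq_abs] using this
  · have := abs_im_le_norm (zz p)
    rw [e] at this ⊢
    simpa [Int.norm_eq_abs] using this

lemma zz_pow_re (N : ℕ) (p : ℤ × ℤ) :
    (zz p ^ N).re = ‖zz p‖ ^ N * Real.cos (N * latticeAngle p) := by
  have : zz p ^ N = ((‖zz p‖ ^ N : ℝ) : ℂ) * exp (((N * latticeAngle p : ℝ) : ℂ) * I) := by
    conv_lhs => rw [← norm_mul_exp_arg_mul_I (zz p)]
    rw [mul_pow, ← exp_nat_mul, latticeAngle, zz]
    push_cast
    ring_nf
  rw [this, re_ofReal_mul, exp_ofReal_mul_I_re]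

lemma Y_eq_latC {m : ℕ} (hm : 1 ≤ m) {s : ℂ} (hs : 1 < s.re) :
    Y m s = (Real.pi : ℂ) ^ (-(s + 2 * m)) * Gamma (s + 2 * m) * latC 1 (4 * m) s := by
  have hN : 4 * m ≠ 0 := by omega
  have hre : (s + 2 * m).re = s.re + 2 * m := by simp
  have hpos : 0 < (s + 2 * m).re := by rw [hre]; positivity
  have hzero : (((zz 0) ^ (4 * m)).re : ℂ) = 0 := by simp [zz, hN]
  have h := hasSum_mellin_pi_mul₀ (ι := ℤ × ℤ) (a := fun p => ((zz p ^ (4 * m)).re : ℂ))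
    (p := fun p => normSq (zz p)) (F := fun t => (Th (4 * m) t : ℂ)) (s := s + 2 * m)
    (fun p => normSq_nonneg _) hpos (by
      intro t ht
      have := hasSum_ofReal.mpr (Th_hasSum (4 * m) ht)
      convert this using 1
      funext p
      split_ifs with h0
      · rw [normSq_zz_eq_zero.mp h0]
        simp [zz, hN]
      · simp [gw]) (by
      refine (summable_zz_rpow (r := 2 * s.re) (by linarith)).of_nonneg_of_le
        (fun p => by have := normSq_nonneg (zz p); positivity) fun p => ?_
      rcases eq_or_ne p 0 with rfl | hp
      · rw [hzero, norm_zero, zero_div]; positivity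
      have hn : 0 < ‖zz p‖ := by
        rw [norm_pos_iff]; intro h0; apply hp; rw [← normSq_zz_eq_zero, h0]; simp
      have e1 : normSq (zz p) ^ (s + 2 * m).re = ‖zz p‖ ^ (2 * s.re) * ‖zz p‖ ^ (4 * m) := by
        rw [hre, normSq_eq_norm_sq, ← Real.rpow_natCast_mul hn.le, ← Real.rpow_natCast ‖zz p‖ (4 * m),
          ← Real.rpow_add hn]
        congr 1; push_cast; ring
      rw [e1, Real.rpow_neg hn.le, ← one_div, norm_real, div_le_div_iff₀ (by positivity) (by positivity), one_mul,
        mul_comm]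
      refine mul_le_mul_of_nonneg_left ?_ (by positivity)
      rw [← norm_pow]
      exact abs_re_le_norm _)
  rw [Y, ← h.tsum_eq, latC, ← tsum_mul_left]
  rw [← tsum_subtype_eq_of_support_subset (s := {p : ℤ × ℤ | p ≠ 0})]
  · refine tsum_congr fun p => ?_
    have hp : (p : ℤ × ℤ) ≠ 0 := p.2
    have hn : (normSq (zz p) : ℂ) ≠ 0 := by
      rw [Ne, ofReal_eq_zero, normSq_zz_eq_zero]; exact hp
    have e2 : ((p : ℤ × ℤ).1 : ℂ) ^ 2 + ((p : ℤ × ℤ).2 : ℂ) ^ 2 = (normSq (zz p) : ℂ) := by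
      rw [normSq_zz]; push_cast; rfl
    have e3 : (normSq (zz p) : ℂ) ^ (s + 2 * m) =
        (normSq (zz p) : ℂ) ^ s * ((‖zz p‖ ^ (4 * m) : ℝ) : ℂ) := by
      rw [cpow_add _ _ hn]
      congr 1
      rw [show (2 * m : ℂ) = ((2 * m : ℕ) : ℂ) by push_cast; rfl, cpow_natCast, normSq_eq_norm_sq,
        ← ofReal_pow, ← pow_mul]
      congr 2; ring
    have hn3 : ((‖zz p‖ ^ (4 * m) : ℝ) : ℂ) ≠ 0 := by
      rw [Ne, ofReal_eq_zero]
      refine pow_ne_zero _ ?_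
      rw [norm_ne_zero_iff]; rintro h0; apply hn; rw [h0]; simp
    rw [e2, pow_one, zz_pow_re, e3, ofReal_mul]
    field_simp
  · intro p hp
    rw [Function.mem_support] at hp
    rintro rfl
    apply hp
    rw [hzero]; simp

lemma Gamma_ne_zero' {s : ℂ} (h : 0 < s.re) (m : ℕ) : Gamma (s + 2 * m) ≠ 0 := by
  refine Gamma_ne_zero_of_re_pos ?_
  simp; positivity
/-! ### Logarithmic derivatives on the critical line -/

/-- The polynomial `Γ(1-s+2m) / Γ(1-s)` in product form. -/
noncomputable def P (m : ℕ) (s : ℂ) : ℂ := ∏ k ∈ Finset.range (2 * m), (1 - s + k)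

lemma P_factor_re {s : ℂ} (h1 : s.re < 1) (k : ℕ) : 0 < (1 - s + k).re := by
  simp only [add_re, sub_re, one_re, natCast_re]
  have : (0 : ℝ) ≤ k := k.cast_nonneg
  linarith

lemma P_ne_zero {s : ℂ} (h1 : s.re < 1) (m : ℕ) : P m s ≠ 0 :=
  Finset.prod_ne_zero_iff.mpr fun k _ => strip_ne_zero (P_factor_re h1 k)

lemma Gamma_add_nat {s : ℂ} (hs : 0 < s.re) (n : ℕ) :
    Gamma (s + n) = (∏ k ∈ Finset.range n, (s + k)) * Gamma s := by
  induction n with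
  | zero => simp
  | succ n ih =>
    have : s + n ≠ 0 := strip_ne_zero (by simp; positivity)
    rw [Nat.cast_succ, ← add_assoc, Gamma_add_one _ this, ih, Finset.prod_range_succ]
    ring

lemma P_logDeriv_re {m : ℕ} (hm : 1 ≤ m) {s : ℂ} (h1 : s.re < 1) : (logDeriv (P m) s).re < 0 := by
  have : logDeriv (P m) s = ∑ k ∈ Finset.range (2 * m), -(1 - s + k)⁻¹ := by
    change logDeriv (fun s => ∏ k ∈ Finset.range (2 * m), (1 - s + (k : ℂ))) s = _
    rw [logDeriv_prod (fun k _ => strip_ne_zero (P_factor_re h1 k)) (fun k _ => by fun_prop)]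
    refine Finset.sum_congr rfl fun k _ => ?_
    have hd : HasDerivAt (fun s : ℂ => 1 - s + (k : ℂ)) (-1) s :=
      ((hasDerivAt_id s).const_sub 1).add_const _
    rw [logDeriv_apply, hd.deriv, neg_div, one_div]
  rw [this, re_sum]
  refine Finset.sum_neg (fun k _ => ?_) ⟨0, by simp; omega⟩
  rw [neg_re, inv_re, neg_lt_zero]
  exact div_pos (P_factor_re h1 k) (normSq_pos.mpr (strip_ne_zero (P_factor_re h1 k)))

/-- A function invariant under `s ↦ 1 - s` and commuting with conjugation is real on the critical
line, so its logarithmic derivative is purely imaginary there. -/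
lemma crit_logDeriv_re {E : ℂ → ℂ} (hE : ∀ s : ℂ, 0 < s.re → s.re < 1 → E (1 - s) = E s)
    (hc : ∀ s : ℂ, 0 < s.re → s.re < 1 → E (conj s) = conj (E s)) (t : ℝ)
    (hd : DifferentiableAt ℂ E (1 / 2 + t * I)) : (logDeriv E (1 / 2 + t * I)).re = 0 := by
  have hr : ∀ u : ℝ, conj (E (1 / 2 + u * I)) = E (1 / 2 + u * I) := by
    intro u
    have a : (0 : ℝ) < (1 / 2 + u * I : ℂ).re := by simp
    have b : (1 / 2 + u * I : ℂ).re < 1 := by simp; norm_num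
    rw [← hc _ a b, ← hE _ a b]
    congr 1
    simp only [map_add, map_mul, map_div₀, map_one, conj_ofReal, conj_I, map_ofNat]
    ring
  have h1 : HasDerivAt (fun u : ℝ => E (1 / 2 + u * I)) (deriv E (1 / 2 + t * I) * I) t := by
    have h2 : HasDerivAt (fun u : ℂ => 1 / 2 + u * I) I (t : ℂ) := by
      simpa using ((hasDerivAt_id (t : ℂ)).mul_const I).const_add (1 / 2)
    exact (hd.hasDerivAt.comp (t : ℂ) h2).comp_ofReal
  have h3 := h1.star
  have h4 : (fun u : ℝ => star (E (1 / 2 + u * I))) = fun u : ℝ => E (1 / 2 + u * I) := by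
    funext u; exact hr u
  rw [h4] at h3
  have h5 := h3.unique h1
  obtain ⟨a, ha⟩ := conj_eq_iff_real.mp (hr t)
  obtain ⟨b, hb⟩ := conj_eq_iff_real.mp h5
  have h6 : deriv E (1 / 2 + t * I) = -(b * I) := by
    rw [← hb, mul_assoc, I_mul_I]; ring
  rw [logDeriv_apply, h6, ha, div_ofReal_re]
  simp

/-- If `D = E / P` with `E` symmetric and real, then `D'/D` has nonzero real part on the critical
line wherever `D` does not vanish. -/
lemma no_zero {E D : ℂ → ℂ} {m : ℕ} (hm : 1 ≤ m)
    (hd : ∀ s : ℂ, 0 < s.re → s.re < 1 → DifferentiableAt ℂ E s)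
    (hE : ∀ s : ℂ, 0 < s.re → s.re < 1 → E (1 - s) = E s)
    (hc : ∀ s : ℂ, 0 < s.re → s.re < 1 → E (conj s) = conj (E s))
    (hD : ∀ s : ℂ, 0 < s.re → s.re < 1 → D s = E s / P m s) (t : ℝ)
    (h0 : deriv D (1 / 2 + t * I) = 0) : D (1 / 2 + t * I) = 0 := by
  set s₀ : ℂ := 1 / 2 + t * I with hs
  have a : (0 : ℝ) < s₀.re := by simp [hs]
  have b : s₀.re < 1 := by simp [hs]; norm_num
  by_contra hne
  have hEP : D =ᶠ[nhds s₀] fun s => E s / P m s := by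
    filter_upwards [(isOpen_lt continuous_const continuous_re).mem_nhds a,
      (isOpen_lt continuous_re continuous_const).mem_nhds b] with s h1 h2 using hD s h1 h2
  have hE0 : E s₀ ≠ 0 := by
    intro h; apply hne; rw [hD _ a b, h, zero_div]
  have hl : logDeriv (fun s => E s / P m s) s₀ = 0 := by
    rw [logDeriv_apply, ← hEP.deriv_eq, h0, zero_div]
  rw [logDeriv_div _ hE0 (P_ne_zero b m) (hd _ a b) (by unfold P; fun_prop)] at hl
  have h1 := crit_logDeriv_re hE hc t (hd _ a b)
  have h2 := P_logDeriv_re hm b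
  have h3 := congrArg re hl
  rw [sub_re, h1, zero_re] at h3
  linarith

/-! ### The factorization of `Δ₃` -/

/-- The identification of `Y` with the completion of `F`, extended from `Re s > 1` to `Re s > 0`. -/
lemma F_eq {m : ℕ} (hm : 1 ≤ m) {F : ℂ → ℂ} (hF : Differentiable ℂ F)
    (hFeq : ∀ s : ℂ, 1 < s.re → F s = latC 1 (4 * m) s) {s : ℂ} (h0 : 0 < s.re) :
    Y m s = (Real.pi : ℂ) ^ (-(s + 2 * m)) * Gamma (s + 2 * m) * F s := by
  have hpi : (Real.pi : ℂ) ≠ 0 := by exact_mod_cast Real.pi_ne_zero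
  -- `1 / Γ` is entire, so both sides of the comparison are entire.
  have h := eq_of_eq_re_gt (f := F)
    (g := fun s => (Real.pi : ℂ) ^ (s + 2 * m) * (Gamma (s + 2 * m))⁻¹ * Y m s) hF
    (((show Differentiable ℂ fun s : ℂ => (Real.pi : ℂ) ^ (s + 2 * m) from
      (differentiable_id.add_const _).const_cpow (Or.inl hpi)).mul
      (differentiable_one_div_Gamma.comp (differentiable_id.add_const _))).mul
      (Y_differentiable hm)) 1 (by
      intro s hs
      have hG := Gamma_ne_zero' (s := s) (by linarith) m
      have hp : (Real.pi : ℂ) ^ (s + 2 * m) ≠ 0 := (cpow_ne_zero_iff_of_exponent_ne_zero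
        (strip_ne_zero (by simp; positivity))).mpr hpi
      rw [hFeq s hs, Y_eq_latC hm hs, cpow_neg]
      field_simp)
  have hG := Gamma_ne_zero' h0 m
  have hp : (Real.pi : ℂ) ^ (s + 2 * m) ≠ 0 := (cpow_ne_zero_iff_of_exponent_ne_zero
    (strip_ne_zero (by simp; positivity))).mpr hpi
  rw [h, cpow_neg]
  field_simp

lemma Delta3_eq {m : ℕ} (hm : 1 ≤ m) (χ : DirichletCharacter ℂ 4) {F : ℂ → ℂ}
    (hF : Differentiable ℂ F)
    (hFeq : ∀ s : ℂ, 1 < s.re → F s = latC 1 (4 * m) s) {s : ℂ} (h0 : 0 < s.re)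
    (h1 : s.re < 1) :
    Delta3 m χ.LFunction F s =
      (4 * (Real.pi : ℂ) ^ (2 * m) * (X χ s * Y m s)) / P m s := by
  have hpi : (Real.pi : ℂ) ≠ 0 := by exact_mod_cast Real.pi_ne_zero
  have h1' : 0 < (1 - s).re := by simpa using h1
  have g1 : Gamma s ≠ 0 := Gamma_ne_zero_of_re_pos h0
  have g2 : Gamma (1 - s) ≠ 0 := Gamma_ne_zero_of_re_pos h1'
  have g3 := Gamma_ne_zero' h0 m
  have hP := P_ne_zero h1 m
  have g4 : Gamma (1 - s + 2 * m) = P m s * Gamma (1 - s) := by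
    have := Gamma_add_nat h1' (2 * m)
    push_cast at this
    exact this
  have hp : (Real.pi : ℂ) ^ s ≠ 0 :=
    (cpow_ne_zero_iff_of_exponent_ne_zero (strip_ne_zero h0)).mpr hpi
  have e1 : (Real.pi : ℂ) ^ (2 * s) = (Real.pi : ℂ) ^ s * (Real.pi : ℂ) ^ s := by
    rw [two_mul, cpow_add _ _ hpi]
  have e2 : (Real.pi : ℂ) ^ (s + 2 * m) = (Real.pi : ℂ) ^ s * (Real.pi : ℂ) ^ (2 * m) := by
    rw [cpow_add _ _ hpi, show (2 * m : ℂ) = ((2 * m : ℕ) : ℂ) by push_cast; rfl, cpow_natCast]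
  rw [Delta3, calF, F_eq hm hF hFeq h0, X, g4, cpow_neg, cpow_neg, e1, e2]
  field_simp

end NoSep

/-- For `m ≥ 1` there is `T₀ > 0` such that for `t ≥ T₀`, any zero of the derivative
`Δ₃'(2,2m;·)` on the critical line is a zero of `Δ₃(2,2m;·)` (hence a multiple zero). -/
theorem deriv_Delta3_no_separate_zeros (m : ℕ) (hm : 1 ≤ m)
    (χ : DirichletCharacter ℂ 4) (hχ : χ ≠ 1)
    (F : ℂ → ℂ) (hF : Differentiable ℂ F)
    (hFeq : ∀ s : ℂ, 1 < s.re → F s = latC 1 (4 * m) s) :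
    ∃ T₀ : ℝ, 0 < T₀ ∧ ∀ t : ℝ, T₀ ≤ t →
      deriv (Delta3 m χ.LFunction F) (1 / 2 + t * Complex.I) = 0 →
      Delta3 m χ.LFunction F (1 / 2 + t * Complex.I) = 0 := by
  -- The argument works at every height, so any positive `T₀` will do.
  refine ⟨1, one_pos, fun t _ => ?_⟩
  refine NoSep.no_zero hm
    (E := fun s => 4 * (Real.pi : ℂ) ^ (2 * m) * (NoSep.X χ s * NoSep.Y m s)) ?_ ?_ ?_
    (fun s => NoSep.Delta3_eq hm χ hF hFeq) t
  · intro s h0 h1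
    exact ((NoSep.X_differentiableAt χ hχ h0 h1).mul (NoSep.Y_differentiable hm s)).const_mul _
  · intro s h0 h1
    simp only [NoSep.X_one_sub χ hχ h0 h1, NoSep.Y_one_sub hm]
  · intro s _ _
    simp only [NoSep.X_conj χ hχ, NoSep.Y_conj, map_mul, map_pow, Complex.conj_ofReal, map_ofNat]
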